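/- (Caputo case, ψ(t) = t) Suppose q ∈ L¹(a,b), κ ∈ (0,1), and |𝒢(x)| ≤ κ·‖x‖ for all x ∈ C([a,b],ℝ). If there exists a nontrivial continuous function x: [a,b] → ℝ satisfying x(t) = ((t−a)/(b−a))^β·𝒢(x) + ∫_a^b G(τ,t)·q(τ)·x(τ) dτ for all t ∈ [a,b], then ∫_a^b |q(τ)| dτ ≥ (1−κ)·Γ(α+β)/(b−a)^{α+β−1}. -/

import Mathlib

/-!
Evaluate the integral equation at a point `t₀` where `|x|` attains its maximum `‖x‖ > 0`. Since
`((t₀ - a) / (b - a)) ^ β ≤ 1`, the boundary term is at most `κ ‖x‖`. Both terms of the Green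
function lie in `[0, M]` with `M = (b - a) ^ (α + β - 1) / Γ(α + β)`, so `|G| ≤ M` and the integral
is at most `M ‖x‖ ∫ |q|`. Dividing `‖x‖ ≤ κ ‖x‖ + M ‖x‖ ∫ |q|` by `‖x‖` gives the bound.
-/

open MeasureTheory Set

/-- The Green function in the Caputo case `ψ(t) = t`. -/
noncomputable def G (a b α β : ℝ) (τ t : ℝ) : ℝ :=
  if τ ≤ t then
    (t - a) ^ β * (b - τ) ^ (α + β - 1) /
        (Real.Gamma (α + β) * (b - a) ^ β) -
      (t - τ) ^ (α + β - 1) / Real.Gamma (α + β)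
  else
    (t - a) ^ β * (b - τ) ^ (α + β - 1) /
      (Real.Gamma (α + β) * (b - a) ^ β)

/-- The supremum norm of a function over the interval `[a,b]`. -/
noncomputable def supNorm (a b : ℝ) (x : ℝ → ℝ) : ℝ :=
  ⨆ t : Set.Icc a b, |x ↑t|

section IntegralEquation

variable {X E : Type*} [MeasurableSpace X] {μ : Measure X} [NormedAddCommGroup E] [NormedSpace ℝ E]
  {k q : X → ℝ} {x : X → E} {M : ℝ}

lemma norm_integral_mul_smul_le {R : ℝ} (hq : Integrable q μ) (hk : ∀ᵐ τ ∂μ, |k τ| ≤ M)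
    (hx : ∀ᵐ τ ∂μ, ‖x τ‖ ≤ R) :
    ‖∫ τ, (k τ * q τ) • x τ ∂μ‖ ≤ M * R * ∫ τ, |q τ| ∂μ := by
  rw [← integral_const_mul]
  refine norm_integral_le_of_norm_le (hq.abs.const_mul _) ?_
  filter_upwards [hk, hx] with τ hkτ hxτ
  calc ‖(k τ * q τ) • x τ‖ = |k τ| * ‖x τ‖ * |q τ| := by
        rw [norm_smul, Real.norm_eq_abs, abs_mul, mul_right_comm]
    _ ≤ M * R * |q τ| := by
        gcongr
        exact (abs_nonneg _).trans hkτ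

lemma one_sub_le_mul_integral_abs_of_eq_add_integral {u v : E} {κ : ℝ} (hq : Integrable q μ)
    (hk : ∀ᵐ τ ∂μ, |k τ| ≤ M) (hx : ∀ᵐ τ ∂μ, ‖x τ‖ ≤ ‖v‖) (hv : v ≠ 0) (hu : ‖u‖ ≤ κ * ‖v‖)
    (heq : v = u + ∫ τ, (k τ * q τ) • x τ ∂μ) :
    1 - κ ≤ M * ∫ τ, |q τ| ∂μ := by
  have hle : ‖v‖ ≤ κ * ‖v‖ + M * ‖v‖ * ∫ τ, |q τ| ∂μ :=
    calc ‖v‖ = ‖u + ∫ τ, (k τ * q τ) • x τ ∂μ‖ := congrArg norm heq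
      _ ≤ ‖u‖ + ‖∫ τ, (k τ * q τ) • x τ ∂μ‖ := norm_add_le _ _
      _ ≤ κ * ‖v‖ + M * ‖v‖ * ∫ τ, |q τ| ∂μ := add_le_add hu (norm_integral_mul_smul_le hq hk hx)
  refine le_of_mul_le_mul_right ?_ (norm_pos_iff.2 hv)
  linarith

end IntegralEquation

section SupNorm

variable {a b : ℝ} {x : ℝ → ℝ}

lemma abs_le_supNorm (hx : ContinuousOn x (Icc a b)) {t : ℝ} (ht : t ∈ Icc a b) :
    |x t| ≤ supNorm a b x := by
  rw [supNorm, ← sSup_image' (f := fun t ↦ |x t|)]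
  exact le_csSup (isCompact_Icc.bddAbove_image hx.abs) (mem_image_of_mem _ ht)

lemma exists_abs_eq_supNorm (hab : a ≤ b) (hx : ContinuousOn x (Icc a b)) :
    ∃ t ∈ Icc a b, |x t| = supNorm a b x := by
  obtain ⟨t, ht, hmax⟩ := isCompact_Icc.exists_sSup_image_eq (nonempty_Icc.2 hab) hx.abs
  exact ⟨t, ht, by rw [supNorm, ← hmax, sSup_image']⟩

end SupNorm

section GreenFunction

variable {a b α β τ t : ℝ}

lemma sub_div_sub_rpow_mem_Icc (hβ : 0 ≤ β) (ht : t ∈ Icc a b) :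
    ((t - a) / (b - a)) ^ β ∈ Icc 0 1 := by
  have hta : 0 ≤ t - a := sub_nonneg.2 ht.1
  have hba : 0 ≤ b - a := sub_nonneg.2 (ht.1.trans ht.2)
  exact ⟨by positivity, Real.rpow_le_one (by positivity)
    (div_le_one_of_le₀ (sub_le_sub_right ht.2 a) hba) hβ⟩

lemma rpow_div_Gamma_mem_Icc {r l s : ℝ} (hr : r ∈ Icc 0 l) (hs : 1 ≤ s) :
    r ^ (s - 1) / Real.Gamma s ∈ Icc 0 (l ^ (s - 1) / Real.Gamma s) := by
  have hr0 : 0 ≤ r := hr.1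
  refine ⟨by positivity, ?_⟩
  gcongr
  exact hr.2

lemma G_eq_mul_sub_ite (ht : t ∈ Icc a b) :
    G a b α β τ t =
      ((t - a) / (b - a)) ^ β * ((b - τ) ^ (α + β - 1) / Real.Gamma (α + β)) -
        if τ ≤ t then (t - τ) ^ (α + β - 1) / Real.Gamma (α + β) else 0 := by
  have hba : a ≤ b := ht.1.trans ht.2
  rw [G, Real.div_rpow (sub_nonneg.2 ht.1) (sub_nonneg.2 hba), div_mul_div_comm,
    mul_comm ((b - a) ^ β)]
  split_ifs <;> simp only [sub_zero]

lemma abs_G_le (hβ : 0 ≤ β) (hαβ : 1 ≤ α + β) (hτ : τ ∈ Icc a b) (ht : t ∈ Icc a b) :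
    |G a b α β τ t| ≤ (b - a) ^ (α + β - 1) / Real.Gamma (α + β) := by
  have hcoeff := sub_div_sub_rpow_mem_Icc hβ ht
  have hbτ := rpow_div_Gamma_mem_Icc (r := b - τ) (l := b - a)
    ⟨sub_nonneg.2 hτ.2, sub_le_sub_left hτ.1 b⟩ hαβ
  rw [G_eq_mul_sub_ite ht]
  refine abs_sub_le_of_nonneg_of_le (mul_nonneg hcoeff.1 hbτ.1)
    ((mul_le_of_le_one_left hbτ.1 hcoeff.2).trans hbτ.2) ?_ ?_ <;> split_ifs with hτt
  · exact (rpow_div_Gamma_mem_Icc (l := t - τ) ⟨sub_nonneg.2 hτt, le_rfl⟩ hαβ).1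
  · exact le_rfl
  · exact (rpow_div_Gamma_mem_Icc ⟨sub_nonneg.2 hτt, sub_le_sub ht.2 hτ.1⟩ hαβ).2
  · exact hbτ.1.trans hbτ.2

end GreenFunction

theorem lyapunov_caputo_general {a b α β κ g : ℝ} {q x : ℝ → ℝ} (hab : a < b) (hβ : 0 ≤ β)
    (hαβ : 1 ≤ α + β) (hq : IntervalIntegrable q volume a b)
    (hg : |g| ≤ κ * supNorm a b x) (hx_cont : ContinuousOn x (Icc a b))
    (hx_nontrivial : ∃ t ∈ Icc a b, x t ≠ 0)
    (hmild : ∀ t ∈ Icc a b,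
      x t = ((t - a) / (b - a)) ^ β * g + ∫ τ in a..b, G a b α β τ t * q τ * x τ) :
    (1 - κ) * Real.Gamma (α + β) / (b - a) ^ (α + β - 1) ≤ ∫ τ in a..b, |q τ| := by
  obtain ⟨t₀, ht₀, hmax⟩ := exists_abs_eq_supNorm hab.le hx_cont
  have hx₀ : x t₀ ≠ 0 := by
    obtain ⟨t, ht, hxt⟩ := hx_nontrivial
    exact abs_pos.1 (hmax ▸ (abs_pos.2 hxt).trans_le (abs_le_supNorm hx_cont ht))
  have hboundary : |((t₀ - a) / (b - a)) ^ β * g| ≤ κ * |x t₀| := by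
    obtain ⟨hcoeff_nonneg, hcoeff_le⟩ := sub_div_sub_rpow_mem_Icc hβ ht₀
    rw [abs_mul, abs_of_nonneg hcoeff_nonneg, hmax]
    exact (mul_le_of_le_one_left (abs_nonneg g) hcoeff_le).trans hg
  have hbound : 1 - κ ≤
      (b - a) ^ (α + β - 1) / Real.Gamma (α + β) * ∫ τ in a..b, |q τ| := by
    simp only [intervalIntegral.integral_of_le hab.le] at hmild ⊢
    exact one_sub_le_mul_integral_abs_of_eq_add_integral
      ((intervalIntegrable_iff_integrableOn_Ioc_of_le hab.le).1 hq)
      (ae_restrict_of_forall_mem measurableSet_Ioc fun τ hτ ↦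
        abs_G_le hβ hαβ (Ioc_subset_Icc_self hτ) ht₀)
      (ae_restrict_of_forall_mem measurableSet_Ioc fun τ hτ ↦
        (abs_le_supNorm hx_cont (Ioc_subset_Icc_self hτ)).trans_eq hmax.symm)
      hx₀ hboundary (hmild t₀ ht₀)
  have hΓ : 0 < Real.Gamma (α + β) := Real.Gamma_pos_of_pos (one_pos.trans_le hαβ)
  have hpow : 0 < (b - a) ^ (α + β - 1) := Real.rpow_pos_of_pos (sub_pos.2 hab) _
  rwa [div_le_iff₀' hpow, ← le_div_iff₀ hΓ, mul_div_right_comm]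

theorem lyapunov_caputo
    (a b α β κ : ℝ) (hab : a < b)
    (hα0 : 0 < α) (hα1 : α ≤ 1) (hβ0 : 0 < β) (hβ1 : β ≤ 1) (hαβ : 1 < α + β)
    (q : ℝ → ℝ) (𝒢 : (ℝ → ℝ) → ℝ)
    (hq : IntervalIntegrable q volume a b)
    (hκ0 : 0 < κ) (hκ1 : κ < 1)
    (h𝒢 : ∀ x : ℝ → ℝ, ContinuousOn x (Set.Icc a b) → |𝒢 x| ≤ κ * supNorm a b x)
    (x : ℝ → ℝ) (hx_cont : ContinuousOn x (Set.Icc a b))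
    (hx_nontrivial : ∃ t ∈ Set.Icc a b, x t ≠ 0)
    (hmild : ∀ t ∈ Set.Icc a b,
      x t = ((t - a) / (b - a)) ^ β * 𝒢 x +
        ∫ τ in a..b, G a b α β τ t * q τ * x τ) :
    ∫ τ in a..b, |q τ| ≥ (1 - κ) * Real.Gamma (α + β) / (b - a) ^ (α + β - 1) :=
  lyapunov_caputo_general hab hβ0.le hαβ.le hq (h𝒢 x hx_cont) hx_cont hx_nontrivial hmild
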